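/- Theorem 4.3 (polynomial realizations over the field of identifiable functions). Let k be a subfield of an algebraically closed field K of characteristic zero, and let F ∈ k[u,u₁,y,y₁] be irreducible over K with positive degree in y₁. If F admits a rational realization (f,g) with f, g ∈ k(u,x) (the fraction field of k[u,x], viewed inside K(u,x)), and F also admits a polynomial realization (with f, g ∈ K[u,x]), then F admits a polynomial realization (f₀,g₀) with f₀, g₀ ∈ k[u,x], i.e., a polynomial k-realization. -/

import Mathlib

/-!
Let `(f₂, g₂)` be the given realization over `k(u,x)` and `(f₁, g₁)` the given polynomial
realization.

*Comparing the two realizations.*  Since `F` is irreducible of positive degree in `y₁`, the fields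
`K(u,u₁,gᵢ,L_{fᵢ}(gᵢ))` are both the fraction field of `K[u,u₁,y,y₁]/(F)`, and `L` is algebraic
over each of them.  Hence there is a `K`-embedding `ψ` of `L` into an algebraic closure `Ω` of `L`
which fixes `u` and `u₁` and sends `g₁` to `g₂` and `L_{f₁}(g₁)` to `L_{f₂}(g₂)`
(`exists_common_embedding`).  Put `ξ = ψ(x)`.  Extend `∂/∂x`, `∂/∂u`, `∂/∂u₁` to `Ω`.  Applying
them to the two identities `ψ(g₁) = g₂` and `ψ(L_{f₁}(g₁)) = L_{f₂}(g₂)` gives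
`∂ξ/∂u₁ = ∂ξ/∂u = 0`, `∂ξ/∂x ≠ 0` and `ψ(f₁) = f₂ · ∂ξ/∂x`.  So `g₂` and `f₂ · ∂ξ/∂x` lie in
`K[u,ξ]`, and the `u`-coefficients of `g₂` lie in `k(x) ∩ K[ξ]` (`coeff_mem_of_eval_mem`).

*Finding the new state variable.*  Let `E = k(x) ∩ K(ξ)`.  By Lüroth's theorem `E = k(z)`.  As `E`
contains a nonconstant polynomial in `ξ`, that polynomial is `P(z)/Q(z)` with coprime `P`, `Q` over
`k`.  If `Q` is constant, then `z` is integral over `K[ξ]`, so `z ∈ K[ξ]`.  Otherwise `(z - q)⁻¹` is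
a polynomial in `ξ` for every root `q ∈ K` of `Q`, which forces `q` to be the only root, so `q ∈ k`,
and `z` can be replaced by `(z - q)⁻¹`.  Once `z ∈ K[ξ]`, the element `ξ` is integral over `K[z]`,
whence `k(z) ∩ K[ξ] = k[z]` (`exists_polynomial_generator`).

*The new realization.*  Changing the state from `x` to `z` turns `g₂` and `f₂` into `g₂` and
`f₂ · ∂z/∂x`.  Both have `u`-coefficients in `k(x) ∩ K[ξ]`, hence in `k[z]` (`exists_descent`);
replacing `z` by the variable `x` in them produces the polynomial `k`-realization.
-/

noncomputable section

open MvPolynomial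

/-! ## Setup

The field `L = K(u,u₁,x)` is realized as the fraction field of the polynomial ring
`K[u,u₁,x]` in three variables (`0 ↦ u`, `1 ↦ u₁`, `2 ↦ x`); `u₁` plays the role of
the derivative `u′` of the input `u`.  The partial derivatives `∂/∂x` and `∂/∂u` on
`K[u,x]` extend uniquely to derivations of `K(u,x)` (indeed of all of `L`, killing
`u₁` resp. fixing it); below they are taken as data `Dx, Du : Derivation K L L`
characterized by their values on the generators `u, u₁, x`. -/

/-- The field `L = K(u,u₁,x)`. -/
abbrev LL (K : Type) [Field K] := FractionRing (MvPolynomial (Fin 3) K)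

variable (K : Type) [Field K]

/-- The input variable `u` as an element of `L`. -/
def uL : LL K := algebraMap (MvPolynomial (Fin 3) K) (LL K) (X 0)

/-- The variable `u₁` (the derivative `u′` of the input) as an element of `L`. -/
def u₁L : LL K := algebraMap (MvPolynomial (Fin 3) K) (LL K) (X 1)

/-- The state variable `x` as an element of `L`. -/
def xL : LL K := algebraMap (MvPolynomial (Fin 3) K) (LL K) (X 2)

/-- The subfield `K(u,x)` of `L`. -/
def Kux : IntermediateField K (LL K) := IntermediateField.adjoin K {uL K, xL K}

/-- The subring `K[u,x]` of `L`. -/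
def KpolyUX : Subalgebra K (LL K) := Algebra.adjoin K {uL K, xL K}

/-- The subring `K(u,u₁)[x]` of `L`: elements that are polynomial in `x` with
coefficients in the subfield `K(u,u₁)`. -/
def KUU₁X : Subring (LL K) :=
  Subring.closure ((IntermediateField.adjoin K {uL K, u₁L K} : Set (LL K)) ∪ {xL K})

variable {K}

/-- The Lie derivative `L_f(g) = (∂g/∂x)·f + (∂g/∂u)·u₁ ∈ L`. -/
def lieD (Dx Du : Derivation K (LL K) (LL K)) (f g : LL K) : LL K :=
  Dx g * f + Du g * u₁L K

/-- `(f,g)` is a rational realization of the IO-equation `F ∈ K[u,u₁,y,y₁]`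
(variables of `F`: `0 ↦ u`, `1 ↦ u₁`, `2 ↦ y`, `3 ↦ y₁`): `f, g ∈ K(u,x)`,
`∂g/∂x ≠ 0`, and `F(u,u₁,g,L_f(g)) = 0` in `L`.  It encodes the ODE system
`x′ = f(u,x)`, `y = g(u,x)` having `F` as its input–output equation. -/
def IsRealization (Dx Du : Derivation K (LL K) (LL K)) (F : MvPolynomial (Fin 4) K)
    (f g : LL K) : Prop :=
  f ∈ Kux K ∧ g ∈ Kux K ∧ Dx g ≠ 0 ∧
    MvPolynomial.aeval ![uL K, u₁L K, g, lieD Dx Du f g] F = 0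

/-- `(f,g)` is a polynomial realization of `F`: a realization with `f, g ∈ K[u,x]`. -/
def IsPolyRealization (Dx Du : Derivation K (LL K) (LL K)) (F : MvPolynomial (Fin 4) K)
    (f g : LL K) : Prop :=
  IsRealization Dx Du F f g ∧ f ∈ KpolyUX K ∧ g ∈ KpolyUX K

/-- A realization `(f,g)` is observable if the subfield `K(u,u₁,g,L_f(g))` of `L`
generated over `K` by `u`, `u₁`, `g` and `L_f(g)` is the whole field `L`. -/
def IsObservable (Dx Du : Derivation K (LL K) (LL K)) (f g : LL K) : Prop :=
  IntermediateField.adjoin K {uL K, u₁L K, g, lieD Dx Du f g} = ⊤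

variable (K) in
/-- The subfield `k(u,x)` of `L`, for a subfield `k ⊆ K`. -/
def kFracUX (k : Subfield K) : Subfield (LL K) :=
  Subfield.closure ((algebraMap K (LL K) '' (k : Set K)) ∪ {uL K, xL K})

variable (K) in
/-- The subring `k[u,x]` of `L`, for a subfield `k ⊆ K`. -/
def kPolyUX (k : Subfield K) : Subring (LL K) :=
  Subring.closure ((algebraMap K (LL K) '' (k : Set K)) ∪ {uL K, xL K})

/-! ### Derivations and algebraic independence -/

/-- A derivation `R`-linear on `S` with values in a formally étale `S`-algebra `T` extends to `T`,
because the differentials of `T` are the base change of those of `S`. -/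
theorem exists_derivation_extension {R S T : Type*} [CommRing R] [CommRing S] [CommRing T]
    [Algebra R S] [Algebra R T] [Algebra S T] [IsScalarTower R S T] [Algebra.FormallyEtale S T]
    (d : Derivation R S T) :
    ∃ D : Derivation R T T, ∀ s, D (algebraMap S T s) = d s := by
  let φ : TensorProduct S T (KaehlerDifferential R S) →ₗ[T] T :=
    TensorProduct.AlgebraTensorModule.lift
      ((LinearMap.lsmul T (KaehlerDifferential R S →ₗ[S] T)).flip d.liftKaehlerDifferential)
  let ψ : KaehlerDifferential R T →ₗ[T] T :=
    φ ∘ₗ (KaehlerDifferential.tensorKaehlerEquivOfFormallyEtale R S T).symm.toLinearMap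
  refine ⟨ψ.compDer (KaehlerDifferential.D R T), fun s => ?_⟩
  change φ ((KaehlerDifferential.tensorKaehlerEquivOfFormallyEtale R S T).symm _) = _
  erw [KaehlerDifferential.tensorKaehlerEquivOfFormallyEtale_symm_D_algebraMap]
  simp [φ]

theorem exists_derivation_algebraic_extension {R L M : Type*} [CommRing R] [Field L] [Field M]
    [CharZero L]
    [Algebra R L] [Algebra R M] [Algebra L M] [IsScalarTower R L M] [Algebra.IsAlgebraic L M]
    (d : Derivation R L L) :
    ∃ D : Derivation R M M, ∀ s, D (algebraMap L M s) = algebraMap L M (d s) := by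
  have : Algebra.FormallyEtale L M := Algebra.FormallyEtale.of_isSeparable L M
  exact exists_derivation_extension ((Algebra.linearMap L M).compDer d)

/-- The partial derivative `∂/∂u₁` on `L`. -/
theorem exists_derivation_u₁ (K : Type) [Field K] :
    ∃ D : Derivation K (LL K) (LL K), D (uL K) = 0 ∧ D (u₁L K) = 1 ∧ D (xL K) = 0 := by
  have : Algebra.FormallyEtale (MvPolynomial (Fin 3) K) (LL K) :=
    Algebra.FormallyEtale.of_isLocalization (nonZeroDivisors _)
  obtain ⟨D, hD⟩ := exists_derivation_extension (R := K) (S := MvPolynomial (Fin 3) K)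
    (T := LL K) ((Algebra.linearMap _ (LL K)).compDer (MvPolynomial.pderiv 1))
  refine ⟨D, ?_, ?_, ?_⟩
  · rw [uL, hD]; simp [MvPolynomial.pderiv_X]
  · rw [u₁L, hD]; simp [MvPolynomial.pderiv_X]
  · rw [xL, hD]; simp [MvPolynomial.pderiv_X]

/-- The chain rule. -/
theorem derivation_aeval {K M σ : Type*} [Fintype σ] [CommRing K] [CommRing M] [Algebra K M]
    (D : Derivation K M M) (v : σ → M) (p : MvPolynomial σ K) :
    D (aeval v p) = ∑ i, aeval v (pderiv i p) * D (v i) := by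
  classical
  induction p using MvPolynomial.induction_on with
  | C a => simp
  | add p q hp hq => simp [hp, hq, add_mul, Finset.sum_add_distrib]
  | mul_X p j h =>
    simp only [map_mul, aeval_X, Derivation.leibniz, h, smul_eq_mul, pderiv_X, map_add, add_mul,
      Finset.sum_add_distrib]
    congr 1
    · rw [Finset.sum_eq_single j] <;> simp +contextual 
    · simp [Finset.mul_sum, mul_assoc]

/-- Jacobian criterion, diagonal case: elements `v i` for which `D i (v j)` is a diagonal matrix with
nonzero diagonal entries are algebraically independent.  A relation of minimal degree is killed by
all partial derivatives, hence constant. -/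
theorem aeval_injective_of_derivations {K M σ : Type*} [Fintype σ] [Field K] [CharZero K]
    [Field M] [Algebra K M]
    (D : σ → Derivation K M M) (v : σ → M) (h0 : ∀ i j, i ≠ j → D i (v j) = 0)
    (h1 : ∀ i, D i (v i) ≠ 0) : Function.Injective (aeval v : MvPolynomial σ K →ₐ[K] M) := by
  classical
  rw [injective_iff_map_eq_zero]
  suffices ∀ n, ∀ p : MvPolynomial σ K, p.totalDegree ≤ n → aeval v p = 0 → p = 0 from
    fun p hp => this _ p le_rfl hp
  intro n
  induction n with
  | zero =>
    intro p hp h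
    rw [Nat.le_zero, totalDegree_eq_zero_iff_eq_C] at hp
    rw [hp] at h ⊢
    simpa using h
  | succ n ih =>
    intro p hp h
    have key : ∀ i, pderiv i p = 0 := by
      intro i
      apply ih
      · refine Finset.sup_le fun m hm => ?_
        rw [mem_support_iff, coeff_pderiv] at hm
        have h2 := (le_totalDegree (mem_support_iff.2 (left_ne_zero_of_mul hm))).trans hp
        rw [Finsupp.sum_add_index' (by simp) (by simp)] at h2
        simpa using h2
      · have h2 := derivation_aeval (D i) v p
        rw [h, map_zero, Finset.sum_eq_single i] at h2
        · exact (mul_eq_zero.1 h2.symm).resolve_right (h1 i)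
        · intro j _ hj; rw [h0 i j hj.symm, mul_zero]
        · simp
    have hp : p = C (p.coeff 0) := by
      ext m
      rw [coeff_C]
      split_ifs with hm
      · rw [hm]
      · obtain ⟨i, hi⟩ : ∃ i, m i ≠ 0 := by
          by_contra! hc
          exact hm (Finsupp.ext fun i => (hc i).symm)
        have h3 := congrArg (coeff (m - Finsupp.single i 1)) (key i)
        have h4 : m - Finsupp.single i 1 + Finsupp.single i 1 = m :=
          tsub_add_cancel_of_le (Finsupp.single_le_iff.2 (Nat.one_le_iff_ne_zero.2 hi))
        rw [coeff_pderiv, h4, coeff_zero] at h3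
        exact (mul_eq_zero.1 h3).resolve_right (Nat.cast_add_one_ne_zero _)
    rw [hp] at h ⊢
    simpa using h

/-- The change of state variable `x ↦ t`: if `∂t/∂x ≠ 0` then `u, u₁, t` are algebraically
independent, so `L = K(u,u₁,x)` maps to `M` with `x` going to `t`. -/
theorem exists_hom {K : Type} [Field K] [CharZero K] {M : Type*} [Field M] [Algebra K M]
    (Dx Du D1 : Derivation K M M) (u u₁ t : M) (hxu : Dx u = 0) (hxu₁ : Dx u₁ = 0)
    (huu : Du u = 1) (huu₁ : Du u₁ = 0) (h1u : D1 u = 0) (h1u₁ : D1 u₁ = 1) (ht : Dx t ≠ 0) :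
    ∃ θ : LL K →ₐ[K] M, θ (uL K) = u ∧ θ (u₁L K) = u₁ ∧ θ (xL K) = t := by
  have hinj := aeval_injective_of_derivations
    ![Du - (Du t / Dx t) • Dx, D1 - (D1 t / Dx t) • Dx, Dx] ![u, u₁, t]
    (by
      intro i j hij
      fin_cases i <;> fin_cases j <;> simp_all)
    (by
      intro i
      fin_cases i <;> simp_all)
  refine ⟨IsFractionRing.liftAlgHom hinj, ?_, ?_, ?_⟩ <;>
  simp [uL, u₁L, xL]

/-! ### Comparing two realizations inside an algebraic closure -/

/-- Two field homomorphisms out of `T`, one into an algebraic extension and one into an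
algebraically closed field, are compatible with an embedding of the former into the latter. -/
theorem exists_field_embedding {T L Ω : Type*} [Field T] [Field L] [Field Ω] [IsAlgClosed Ω]
    (j₁ : T →+* L) (j₂ : T →+* Ω) (h : ∀ a : L, ∃ p : Polynomial T, p ≠ 0 ∧ p.eval₂ j₁ a = 0) :
    ∃ ψ : L →+* Ω, ∀ a, ψ (j₁ a) = j₂ a := by
  algebraize [j₁, j₂]
  have : Algebra.IsAlgebraic T L := ⟨fun a => by
    obtain ⟨p, hp, h⟩ := h a
    exact ⟨p, hp, h⟩⟩
  let ψ : L →ₐ[T] Ω := IsAlgClosed.lift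
  exact ⟨ψ.toRingHom, fun a => ψ.commutes a⟩

/-- Every element of `L` is algebraic over the image of any `K`-endomorphism of `L`, by counting
transcendence degrees. -/
theorem algebraic_over_image {K : Type} [Field K] (i : LL K →ₐ[K] LL K) (a : LL K) :
    ∃ p : Polynomial (LL K), p ≠ 0 ∧ p.eval₂ i.toRingHom a = 0 := by
  have hX : AlgebraicIndependent K (fun j => algebraMap _ (LL K) (X j : MvPolynomial (Fin 3) K)) :=
    (MvPolynomial.algebraicIndependent_X (Fin 3) K).map'
      (f := Algebra.ofId (MvPolynomial (Fin 3) K) (LL K) |>.restrictScalars K)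
      (IsFractionRing.injective _ _)
  have hv := hX.map' (f := i) i.injective
  have htr : Algebra.trdeg K (LL K) = 3 := by
    have : Algebra.IsAlgebraic (MvPolynomial (Fin 3) K) (LL K) :=
      IsLocalization.isAlgebraic _ (nonZeroDivisors (MvPolynomial (Fin 3) K))
    have h := _root_.trdeg_add_eq K (MvPolynomial (Fin 3) K) (A := LL K)
    rw [MvPolynomial.trdeg_of_isDomain, _root_.trdeg_eq_zero] at h
    simpa using h.symm
  have hb := hv.isTranscendenceBasis_of_trdeg_le (by rw [htr]; exact Cardinal.natCast_lt_aleph0)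
    (by rw [htr]; simp)
  obtain ⟨p, hp0, hp⟩ := hb.isAlgebraic.isAlgebraic a
  have hle : Algebra.adjoin K (Set.range (i ∘ fun j => algebraMap _ (LL K)
      (X j : MvPolynomial (Fin 3) K))) ≤ i.range := by
    rw [Algebra.adjoin_le_iff]
    rintro _ ⟨j, rfl⟩
    exact ⟨_, rfl⟩
  let s : _ →ₐ[K] LL K := (AlgEquiv.ofInjective i i.injective).symm.toAlgHom.comp
    (Subalgebra.inclusion hle)
  refine ⟨p.map s.toRingHom, ?_, ?_⟩
  · rwa [Ne, Polynomial.map_eq_zero_iff]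
    exact (AlgEquiv.ofInjective i i.injective).symm.injective.comp
      (Subalgebra.inclusion_injective hle)
  · rw [Polynomial.eval₂_map]
    have : i.toRingHom.comp s.toRingHom = algebraMap _ _ := by
      ext b
      change i ((AlgEquiv.ofInjective i i.injective).symm (Subalgebra.inclusion hle b)) = b
      rw [← AlgEquiv.ofInjective_apply i i.injective, AlgEquiv.apply_symm_apply]
      rfl
    rw [this]
    exact hp

/-- `K[u,u₁,y,y₁]` as polynomials in the last variable `y₁` over `K[u,u₁,y]`. -/
def lastVarEquiv (K : Type) [Field K] :
    MvPolynomial (Fin 4) K ≃ₐ[K] Polynomial (MvPolynomial (Fin 3) K) :=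
  (renameEquiv K (finSuccEquivLast (n := 3))).trans (optionEquivLeft K (Fin 3))

theorem aeval_eq_eval₂_lastVarEquiv {K M : Type} [Field K] [Field M] [Algebra K M]
    (i : LL K →ₐ[K] M) (y : M) (F : MvPolynomial (Fin 4) K) :
    aeval ![i (uL K), i (u₁L K), i (xL K), y] F =
      ((lastVarEquiv K F).map (algebraMap _ (LL K))).eval₂ i.toRingHom y := by
  induction F using MvPolynomial.induction_on with
  | C a =>
    have h : lastVarEquiv K (C a) = Polynomial.C (C a) := by simp [lastVarEquiv]
    rw [h, Polynomial.map_C, Polynomial.eval₂_C, ← MvPolynomial.algebraMap_eq, AlgHom.commutes,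
      ← MvPolynomial.algebraMap_eq, ← IsScalarTower.algebraMap_apply]
    exact (i.commutes a).symm
  | add p q hp hq => simp [hp, hq, Polynomial.eval₂_add]
  | mul_X p j h =>
    rw [map_mul, map_mul, Polynomial.map_mul, Polynomial.eval₂_mul, h]
    congr 1
    have hj : ∀ j : Fin 3, lastVarEquiv K (X j.castSucc) = Polynomial.C (X j) := fun j => by
      simp [lastVarEquiv, -finSuccEquivLast_castSucc, finSuccEquivLast_castSucc j]
    have hl : lastVarEquiv K (X (Fin.last 3)) = Polynomial.X := by
      simp only [lastVarEquiv, AlgEquiv.trans_apply, renameEquiv_apply, rename_X,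
        finSuccEquivLast_last, optionEquivLeft_X_none]
    rw [aeval_X]
    refine Fin.lastCases ?_ (fun j => ?_) j
    · rw [hl]; simp [Fin.last]
    · rw [hj, Polynomial.map_C, Polynomial.eval₂_C]
      fin_cases j <;> rfl

/-- Two `K`-embeddings `i₁`, `i₂` of `K(u,u₁,y)` (modelled on `L`, with `x` playing the role of `y`)
together with roots `y₁`, `y₂` of `F` are conjugate: both extend to the field
`K(u,u₁,y)[y₁]/(F)`, over which the target of `i₁` is algebraic.  Irreducibility of `F` over the
fraction field is Gauss's lemma. -/
theorem exists_common_embedding {K Ω : Type} [Field K] [Field Ω] [IsAlgClosed Ω]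
    [Algebra K Ω] (F : MvPolynomial (Fin 4) K) (hF : Irreducible F) (hdeg : 0 < F.degreeOf 3)
    (i₁ : LL K →ₐ[K] LL K) (i₂ : LL K →ₐ[K] Ω) (y₁ : LL K) (y₂ : Ω)
    (h₁ : aeval ![i₁ (uL K), i₁ (u₁L K), i₁ (xL K), y₁] F = 0)
    (h₂ : aeval ![i₂ (uL K), i₂ (u₁L K), i₂ (xL K), y₂] F = 0) :
    ∃ ψ : LL K →ₐ[K] Ω, (∀ a, ψ (i₁ a) = i₂ a) ∧ ψ y₁ = y₂ := by
  have hirr : Irreducible (lastVarEquiv K F) :=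
    (MulEquiv.irreducible_iff (lastVarEquiv K).toMulEquiv).2 hF
  have hnd : (lastVarEquiv K F).natDegree ≠ 0 := by
    have : (lastVarEquiv K F).natDegree = F.degreeOf 3 := by
      change (optionEquivLeft K (Fin 3) (rename _ F)).natDegree = _
      rw [natDegree_optionEquivLeft,
        ← degreeOf_rename_of_injective (finSuccEquivLast (n := 3)).injective]
      rfl
    omega
  have hirr' := ((hirr.isPrimitive hnd).irreducible_iff_irreducible_map_fraction_map
    (K := LL K)).1 hirr
  rw [aeval_eq_eval₂_lastVarEquiv] at h₁ h₂
  set p := Polynomial.map (algebraMap (MvPolynomial (Fin 3) K) (LL K)) (lastVarEquiv K F)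
  have : Fact (Irreducible p) := ⟨hirr'⟩
  let j₁ : AdjoinRoot p →+* LL K := AdjoinRoot.lift i₁.toRingHom y₁ h₁
  let j₂ : AdjoinRoot p →+* Ω := AdjoinRoot.lift i₂.toRingHom y₂ h₂
  obtain ⟨ψ, hψ⟩ := exists_field_embedding j₁ j₂ (fun a => by
    obtain ⟨q, hq0, hq⟩ := algebraic_over_image i₁ a
    refine ⟨q.map (AdjoinRoot.of p), ?_, ?_⟩
    · rwa [Ne, Polynomial.map_eq_zero]
    · rw [Polynomial.eval₂_map]
      have : j₁.comp (AdjoinRoot.of p) = i₁.toRingHom := AdjoinRoot.lift_comp_of h₁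
      rwa [this])
  have hi : ∀ a, ψ (i₁ a) = i₂ a := fun a => by
    have := hψ (AdjoinRoot.of p a)
    simpa [j₁, j₂] using this
  refine ⟨{ ψ with commutes' := fun c => ?_ }, hi, ?_⟩
  · have := hi (algebraMap K _ c)
    rw [i₁.commutes, i₂.commutes] at this
    exact this
  · have := hψ (AdjoinRoot.root p)
    simpa [j₁, j₂] using this

/-! ### Polynomials with constant coefficients -/

/-- Evaluating at `u` with `D u = 1` intertwines the derivation `D` with the formal derivative on
polynomials with `D`-constant coefficients. -/
theorem derivation_eval_const {R M : Type*} [CommRing R] [Field M] [Algebra R M]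
    (D : Derivation R M M) (u : M) (hu : D u = 1) (p : Polynomial M) (hp : ∀ i, D (p.coeff i) = 0) :
    D (p.eval u) = p.derivative.eval u := by
  rw [Polynomial.derivative_eval, Polynomial.eval_eq_sum, Polynomial.sum, Polynomial.sum, map_sum]
  refine Finset.sum_congr rfl fun n _ => ?_
  simp [hp, hu, Derivation.leibniz_pow, mul_assoc]

/-- An element `u` with `D u = 1` is transcendental over the constants of `D`. -/
theorem eq_zero_of_eval_const {R M : Type*} [CommRing R] [Field M] [CharZero M] [Algebra R M]
    (D : Derivation R M M) (u : M) (hu : D u = 1) (p : Polynomial M)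
    (hp : ∀ i, D (p.coeff i) = 0) (h : p.eval u = 0) : p = 0 := by
  induction hn : p.natDegree using Nat.strong_induction_on generalizing p with
  | _ n ih =>
    by_cases h0 : p.natDegree = 0
    · rw [Polynomial.eq_C_of_natDegree_eq_zero h0] at h ⊢
      simpa using h
    · have hd : p.derivative = 0 := by
        refine ih _ (hn ▸ Polynomial.natDegree_derivative_lt h0) _ (fun i => ?_) ?_ rfl
        · rw [Polynomial.coeff_derivative, Derivation.leibniz, hp]
          have : D ((i : M) + 1) = 0 := by simp
          simp [this]
        · rw [← derivation_eval_const D u hu p hp, h, map_zero]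
      exact absurd (Polynomial.derivative_eq_zero.1 hd) h0

/-- If a polynomial in `u` with `D`-constant coefficients lies in `S(u)`, where `S` consists of
constants, then its coefficients lie in `S`. -/
theorem coeff_mem_of_eval_mem {R k M : Type*} [CommRing R] [Field k] [Field M] [CharZero M]
    [Algebra R M] [Algebra k M] (D : Derivation R M M) (u : M) (hu : D u = 1)
    (S : IntermediateField k M) (hS : ∀ s ∈ S, D s = 0) (p : Polynomial M)
    (hp : ∀ i, D (p.coeff i) = 0) (h : p.eval u ∈ IntermediateField.adjoin S {u}) (i : ℕ) :
    p.coeff i ∈ S := by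
  obtain ⟨A, B, hAB⟩ := (IntermediateField.mem_adjoin_simple_iff S _).1 h
  by_cases hB : Polynomial.aeval u B = 0
  · rw [hB, div_zero] at hAB
    rw [eq_zero_of_eval_const D u hu p hp hAB]
    simp
  · have hDm : ∀ (Q : Polynomial S) (j : ℕ), D ((Q.map (algebraMap S M)).coeff j) = 0 :=
      fun Q j => by rw [Polynomial.coeff_map]; exact hS _ (Q.coeff j).2
    have hev : ∀ Q : Polynomial S, (Q.map (algebraMap S M)).eval u = Polynomial.aeval u Q :=
      fun Q => by rw [Polynomial.eval_map_algebraMap]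
    have h0 : p * B.map (algebraMap S M) - A.map (algebraMap S M) = 0 := by
      refine eq_zero_of_eval_const D u hu _ (fun j => ?_) ?_
      · rw [Polynomial.coeff_sub, map_sub, hDm, sub_zero, Polynomial.coeff_mul, map_sum]
        refine Finset.sum_eq_zero fun x _ => ?_
        rw [Derivation.leibniz, hp, hDm]
        simp
      · rw [Polynomial.eval_sub, Polynomial.eval_mul, hev, hev, hAB, div_mul_cancel₀ _ hB, sub_self]
    have h1 : B.map (algebraMap S M) ∣ A.map (algebraMap S M) :=
      ⟨p, by rw [mul_comm]; exact (sub_eq_zero.1 h0).symm⟩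
    obtain ⟨q, rfl⟩ := (Polynomial.map_dvd_map' _).1 h1
    have hB0 : B.map (algebraMap S M) ≠ 0 := by
      intro hc
      apply hB
      rw [← hev, hc, Polynomial.eval_zero]
    have : p = q.map (algebraMap S M) := by
      apply mul_right_cancel₀ hB0
      rw [sub_eq_zero.1 h0, Polynomial.map_mul, mul_comm]
    rw [this, Polynomial.coeff_map]
    exact (q.coeff i).2

/-! ### Integrality over a polynomial ring in one variable and Lüroth generators -/

/-- A solution `a` of `W(a) ∈ R[s]`, with `W` nonconstant over `R`, is integral over `R[s]`. -/
theorem isIntegralElem_of_eval {R M : Type*} [Field R] [Field M] [Algebra R M] (s a : M)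
    (W C' : Polynomial R) (hW : W.natDegree ≠ 0)
    (h : Polynomial.aeval a W = Polynomial.aeval s C') :
    (Polynomial.aeval (R := R) s).toRingHom.IsIntegralElem a := by
  have hlc : W.leadingCoeff ≠ 0 := by
    rw [Polynomial.leadingCoeff_ne_zero]; rintro rfl; simp at hW
  have hm : (W * Polynomial.C W.leadingCoeff⁻¹).Monic := Polynomial.monic_mul_leadingCoeff_inv
    (Polynomial.leadingCoeff_ne_zero.1 hlc)
  refine ⟨(W * Polynomial.C W.leadingCoeff⁻¹).map Polynomial.C -
    Polynomial.C (C' * Polynomial.C W.leadingCoeff⁻¹), (hm.map _).sub_of_left ?_, ?_⟩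
  · refine Polynomial.degree_C_le.trans_lt ?_
    rw [hm.degree_map, Polynomial.degree_mul_C (inv_ne_zero hlc)]
    exact Polynomial.natDegree_pos_iff_degree_pos.1 (Nat.pos_of_ne_zero hW)
  · have hc : (Polynomial.aeval (R := R) s).toRingHom.comp Polynomial.C = algebraMap R M := by
      ext; simp
    rw [Polynomial.eval₂_sub, Polynomial.eval₂_map, hc, Polynomial.eval₂_C, ← Polynomial.aeval_def]
    simp [h]

theorem isIntegralElem_of_comp {A B M : Type*} [CommRing A] [CommRing B] [CommRing M]
    {f : A →+* B} {g : B →+* M} (hg : Function.Injective g) {b : B}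
    (h : (g.comp f).IsIntegralElem (g b)) : f.IsIntegralElem b := by
  obtain ⟨p, hp, h⟩ := h
  refine ⟨p, hp, hg ?_⟩
  rw [map_zero, Polynomial.hom_eval₂, h]

/-- For `s` transcendental over `R`, the ring `R[s]` is integrally closed in `R(s)`. -/
theorem exists_aeval_of_isIntegralElem {R M : Type*} [Field R] [Field M] [Algebra R M] (s t : M)
    (hs : Transcendental R s) (ht : t ∈ IntermediateField.adjoin R {s})
    (hi : (Polynomial.aeval (R := R) s).toRingHom.IsIntegralElem t) :
    ∃ W : Polynomial R, Polynomial.aeval s W = t := by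
  have hinj : Function.Injective (Polynomial.aeval (R := R) s) :=
    transcendental_iff_injective.1 hs
  have hφ : nonZeroDivisors (Polynomial R) ≤ (nonZeroDivisors M).comap (Polynomial.aeval (R := R) s) :=
    nonZeroDivisors_le_comap_nonZeroDivisors_of_injective _ hinj
  let j : RatFunc R →ₐ[R] M := RatFunc.liftAlgHom (Polynomial.aeval s) hφ
  obtain ⟨P, Q, rfl⟩ := (IntermediateField.mem_adjoin_simple_iff R _).1 ht
  have hj : ∀ P : Polynomial R, j (algebraMap _ _ P) = Polynomial.aeval s P := fun P => by
    have := RatFunc.liftAlgHom_apply_div (Polynomial.aeval s) hφ P 1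
    simpa using this
  have h1 : j (algebraMap _ _ P / algebraMap _ _ Q) = Polynomial.aeval s P / Polynomial.aeval s Q := by
    rw [map_div₀, hj, hj]
  have h2 : IsIntegral (Polynomial R)
      (algebraMap _ (RatFunc R) P / algebraMap (Polynomial R) _ Q) := by
    have hcomp : (Polynomial.aeval (R := R) s).toRingHom =
        (j : RatFunc R →+* M).comp (algebraMap (Polynomial R) (RatFunc R)) := by
      exact RingHom.ext fun P => (hj P).symm
    rw [← h1, hcomp] at hi
    exact isIntegralElem_of_comp (g := (j : RatFunc R →+* M)) (j : RatFunc R →+* M).injective hi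
  obtain ⟨W, hW⟩ := IsIntegrallyClosed.isIntegral_iff.1 h2
  exact ⟨W, by rw [← hj, hW, h1]⟩

/-- If `t` is a polynomial in `t⁻¹` over `A`, then clearing denominators gives a monic equation for
`t`. -/
theorem isIntegralElem_of_inv {A M : Type*} [CommRing A] [Field M] (f : A →+* M) (t : M)
    (ht : t ≠ 0) (H : Polynomial A) (h : t = H.eval₂ f t⁻¹) : f.IsIntegralElem t := by
  have : Nontrivial A := f.domain_nontrivial
  refine ⟨Polynomial.X ^ (H.natDegree + 1) - H.reverse, ?_, ?_⟩
  · refine (Polynomial.monic_X_pow _).sub_of_left ?_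
    rw [Polynomial.degree_X_pow]
    refine Polynomial.degree_le_natDegree.trans_lt ?_
    exact_mod_cast Nat.lt_succ_of_le (Polynomial.reverse_natDegree_le H)
  · let _ : Invertible t⁻¹ := invertibleOfNonzero (inv_ne_zero ht)
    have h1 := Polynomial.eval₂_reverse_mul_pow f t⁻¹ H
    rw [← h, invOf_eq_inv, inv_inv, inv_pow, mul_inv_eq_iff_eq_mul₀ (pow_ne_zero _ ht)] at h1
    rw [Polynomial.eval₂_sub, Polynomial.eval₂_X_pow, h1, pow_succ']
    ring

/-- Lüroth's theorem for subfields of `k(x)` inside an arbitrary extension. -/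
theorem exists_generator {k M : Type*} [Field k] [Field M] [Algebra k M] (x : M)
    (hx : Transcendental k x) (E : IntermediateField k M) (hE : E ≤ IntermediateField.adjoin k {x}) :
    ∃ z, E = IntermediateField.adjoin k {z} := by
  have hinj : Function.Injective (Polynomial.aeval (R := k) x) :=
    transcendental_iff_injective.1 hx
  have hφ : nonZeroDivisors (Polynomial k) ≤ (nonZeroDivisors M).comap (Polynomial.aeval (R := k) x) :=
    nonZeroDivisors_le_comap_nonZeroDivisors_of_injective _ hinj
  let j : RatFunc k →ₐ[k] M := RatFunc.liftAlgHom (Polynomial.aeval x) hφ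
  have hj : j RatFunc.X = x := by
    have := RatFunc.liftAlgHom_apply_div (Polynomial.aeval x) hφ Polynomial.X 1
    simpa using this
  have hr : E ≤ j.fieldRange := by
    refine hE.trans ?_
    rw [IntermediateField.adjoin_simple_le_iff]
    exact ⟨RatFunc.X, hj⟩
  refine ⟨j (RatFunc.Luroth.generator (E.comap j)), ?_⟩
  have h := congrArg (IntermediateField.map j)
    (RatFunc.Luroth.eq_adjoin_generator (E := E.comap j))
  rw [IntermediateField.map_comap_eq_self hr, IntermediateField.adjoin_map,
    Set.image_singleton] at h
  exact h

/-! ### A generator which is a polynomial -/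

/-- If `c = P(z)/Q(z)` is a polynomial in `ξ` and `q` is a root of the reduced denominator `Q`, then
`(z - q)⁻¹` is a polynomial in `ξ`.  Indeed with `P = P(q) + (X - q) P'` and `Q = (X - q) Q'` one has
`P(q) (z - q)⁻¹ = c Q'(z) - P'(z)`, a polynomial in `z - q` over `K[ξ]`, so that
`isIntegralElem_of_inv` applies. -/
theorem exists_aeval_inv_sub_root {k K Ω : Type*} [Field k] [Field K] [Field Ω] [Algebra k K]
    [Algebra K Ω] [Algebra k Ω] [IsScalarTower k K Ω] (ξ z c : Ω) (hξ : Transcendental K ξ)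
    (hz : z ∈ IntermediateField.adjoin K {ξ}) (hzt : Transcendental K z)
    (C : Polynomial K) (hC : Polynomial.aeval ξ C = c)
    (P Q : Polynomial k) (hPQ : IsCoprime P Q) (hQc : Polynomial.aeval z Q * c = Polynomial.aeval z P)
    (q : K) (hq : Polynomial.aeval q Q = 0) :
    ∃ T : Polynomial K, Polynomial.aeval ξ T = (z - algebraMap K Ω q)⁻¹ := by
  have hzq : z - algebraMap K Ω q ≠ 0 := fun h => hzt (by
    rw [sub_eq_zero.1 h]; exact isAlgebraic_algebraMap q)
  refine exists_aeval_of_isIntegralElem ξ _ hξ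
    (inv_mem (sub_mem hz (IntermediateField.algebraMap_mem _ q))) ?_
  obtain ⟨Q', hQ'⟩ := Polynomial.dvd_iff_isRoot.2
    (show (Q.map (algebraMap k K)).IsRoot q by rwa [Polynomial.IsRoot, Polynomial.eval_map_algebraMap])
  have hPq : Polynomial.aeval q P ≠ 0 := by
    obtain ⟨a, b, hab⟩ := hPQ
    intro h
    have := congrArg (Polynomial.aeval q) hab
    simp [h, hq] at this
  obtain ⟨P', hP'⟩ := Polynomial.dvd_iff_isRoot.2
    (show (P.map (algebraMap k K) - Polynomial.C (Polynomial.aeval q P)).IsRoot q by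
      simp [Polynomial.IsRoot, Polynomial.eval_map_algebraMap])
  have hQz : Polynomial.aeval z Q = (z - algebraMap K Ω q) * Polynomial.aeval z Q' := by
    rw [← Polynomial.aeval_map_algebraMap K z Q, hQ']; simp
  have hPz : Polynomial.aeval z P = algebraMap K Ω (Polynomial.aeval q P) +
      (z - algebraMap K Ω q) * Polynomial.aeval z P' := by
    rw [← Polynomial.aeval_map_algebraMap K z P, ← sub_eq_iff_eq_add']
    have := congrArg (Polynomial.aeval z) hP'
    simpa using this
  have hPq' : algebraMap K Ω (Polynomial.aeval q P) ≠ 0 := by simpa using hPq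
  have hev : ∀ R : Polynomial K, ((R.map Polynomial.C).comp
      (Polynomial.X + Polynomial.C (Polynomial.C q))).eval₂ (Polynomial.aeval (R := K) ξ).toRingHom
      (z - algebraMap K Ω q) = Polynomial.aeval z R := by
    intro R
    have hc : (Polynomial.aeval (R := K) ξ).toRingHom.comp Polynomial.C = algebraMap K Ω := by
      ext; simp
    rw [Polynomial.eval₂_comp, Polynomial.eval₂_map, hc]
    simp [Polynomial.aeval_def]
  refine isIntegralElem_of_inv _ _ (inv_ne_zero hzq)
    (Polynomial.C (Polynomial.C (Polynomial.aeval q P)⁻¹) * (Polynomial.C C *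
      (Q'.map Polynomial.C).comp (Polynomial.X + Polynomial.C (Polynomial.C q)) -
      (P'.map Polynomial.C).comp (Polynomial.X + Polynomial.C (Polynomial.C q)))) ?_
  rw [inv_inv, Polynomial.eval₂_mul, Polynomial.eval₂_sub, Polynomial.eval₂_mul, hev, hev,
    Polynomial.eval₂_C, Polynomial.eval₂_C]
  have e1 : (Polynomial.aeval (R := K) ξ).toRingHom C = c := hC
  have e2 : (Polynomial.aeval (R := K) ξ).toRingHom (Polynomial.C (Polynomial.aeval q P)⁻¹) =
      (algebraMap K Ω (Polynomial.aeval q P))⁻¹ := by simp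
  rw [e1, e2]
  rw [hQz, hPz] at hQc
  field_simp
  linear_combination -hQc

/-- If `T = (z - q)⁻¹` and `T' = (z - q')⁻¹` are both polynomials in `ξ`, then `T' - T = (q' - q) T T'`,
which is impossible for degree reasons unless `q = q'`. -/
theorem root_unique {K Ω : Type*} [Field K] [Field Ω] [Algebra K Ω] (ξ z : Ω)
    (hξ : Transcendental K ξ) (hzt : Transcendental K z) (q q' : K) (T T' : Polynomial K)
    (hT : Polynomial.aeval ξ T = (z - algebraMap K Ω q)⁻¹)
    (hT' : Polynomial.aeval ξ T' = (z - algebraMap K Ω q')⁻¹) : q = q' := by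
  by_contra hne
  have hzq : ∀ q : K, z - algebraMap K Ω q ≠ 0 := fun q h => hzt (by
    rw [sub_eq_zero.1 h]; exact isAlgebraic_algebraMap q)
  have hinj := transcendental_iff_injective.1 hξ
  have hnd : ∀ (q : K) (T : Polynomial K), Polynomial.aeval ξ T = (z - algebraMap K Ω q)⁻¹ →
      0 < T.natDegree := by
    intro q T hT
    rw [Nat.pos_iff_ne_zero]
    intro h0
    rw [Polynomial.eq_C_of_natDegree_eq_zero h0, Polynomial.aeval_C] at hT
    apply hzt
    have : z = algebraMap K Ω ((T.coeff 0)⁻¹ + q) := by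
      rw [map_add, map_inv₀, hT, inv_inv, sub_add_cancel]
    rw [this]; exact isAlgebraic_algebraMap _
  have h : T' - T = Polynomial.C (q' - q) * (T * T') := by
    apply hinj
    rw [map_sub, map_mul, map_mul, Polynomial.aeval_C, hT, hT', map_sub]
    have h1 := hzq q
    have h2 := hzq q'
    field_simp
    ring
  have h1 := hnd q T hT
  have h2 := hnd q' T' hT'
  have h3 := congrArg Polynomial.natDegree h
  rw [Polynomial.natDegree_C_mul (sub_ne_zero.2 (Ne.symm hne)),
    Polynomial.natDegree_mul (by rintro rfl; simp at h1) (by rintro rfl; simp at h2)] at h3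
  have h4 := Polynomial.natDegree_sub_le T' T
  omega

/-- A polynomial over a field of characteristic zero with only one root has that root in the base
field. -/
theorem exists_root_in_base {k K : Type*} [Field k] [Field K] [CharZero k] [IsAlgClosed K]
    [Algebra k K] (Q : Polynomial k) (hQ : Q ≠ 0) (q : K) (hq : Polynomial.aeval q Q = 0)
    (huniq : ∀ q' : K, Polynomial.aeval q' Q = 0 → q' = q) : ∃ r : k, algebraMap k K r = q := by
  have hqint : IsIntegral k q := (IsAlgebraic.isIntegral ⟨Q, hQ, hq⟩)
  have hirr := minpoly.irreducible hqint
  have hsep := hirr.separable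
  have hcard := Polynomial.card_rootSet_eq_natDegree (K := K) hsep (IsAlgClosed.splits _)
  have hsub : (minpoly k q).rootSet K ⊆ {q} := by
    intro q' h
    rw [Polynomial.mem_rootSet] at h
    obtain ⟨A, hA⟩ := minpoly.dvd k q hq
    exact huniq q' (by rw [hA, map_mul, h.2, zero_mul])
  have hle : (minpoly k q).natDegree ≤ 1 := by
    rw [← hcard]
    have := Set.card_le_card hsub
    simpa using this
  have h1 : (minpoly k q).degree = 1 := by
    rw [← Nat.cast_one, Polynomial.degree_eq_iff_natDegree_eq_of_pos one_pos]
    have := minpoly.natDegree_pos hqint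
    omega
  exact minpoly.mem_range_of_degree_eq_one k q h1

/-- If `z` is a polynomial in `ξ` over `K` and transcendental over `K`, then
`k(z) ∩ K[ξ] ⊆ k[z]`: elements of `K[ξ]` are integral over `K[z]`, and `k(z) ∩ K[z] = k[z]`. -/
theorem aeval_descent {k K Ω : Type*} [Field k] [Field K] [Field Ω] [Algebra k K]
    [Algebra K Ω] [Algebra k Ω] [IsScalarTower k K Ω] (ξ z h : Ω)
    (hzt : Transcendental K z) (W : Polynomial K)
    (hW : Polynomial.aeval ξ W = z) (hh : h ∈ IntermediateField.adjoin k {z})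
    (H : Polynomial K) (hH : Polynomial.aeval ξ H = h) :
    ∃ R : Polynomial k, Polynomial.aeval z R = h := by
  have hWd : W.natDegree ≠ 0 := by
    intro h0
    rw [Polynomial.eq_C_of_natDegree_eq_zero h0, Polynomial.aeval_C] at hW
    exact hzt (hW ▸ isAlgebraic_algebraMap _)
  have hξi : (Polynomial.aeval (R := K) z).toRingHom.IsIntegralElem ξ :=
    isIntegralElem_of_eval z ξ W Polynomial.X hWd (by simpa using hW)
  have hhi : (Polynomial.aeval (R := K) z).toRingHom.IsIntegralElem h := by
    rw [← hH]
    clear hH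
    induction H using Polynomial.induction_on' with
    | add p q hp hq => rw [map_add]; exact hp.add _ hq
    | monomial n a =>
      have ha : algebraMap K Ω a = (Polynomial.aeval (R := K) z).toRingHom (Polynomial.C a) := by
        simp
      rw [Polynomial.aeval_monomial, ha]
      refine RingHom.IsIntegralElem.mul _ (RingHom.isIntegralElem_map _) ?_
      induction n with
      | zero =>
        rw [pow_zero]
        exact RingHom.isIntegralElem_one _
      | succ n ih => rw [pow_succ]; exact ih.mul _ hξi
  obtain ⟨P, Q, hPQ⟩ := (IntermediateField.mem_adjoin_simple_iff k _).1 hh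
  have hmem : h ∈ IntermediateField.adjoin K {z} :=
    (IntermediateField.mem_adjoin_simple_iff K _).2
      ⟨P.map (algebraMap k K), Q.map (algebraMap k K), by
        rw [Polynomial.aeval_map_algebraMap, Polynomial.aeval_map_algebraMap, hPQ]⟩
  obtain ⟨R, hR⟩ := exists_aeval_of_isIntegralElem z h hzt hmem hhi
  by_cases hQ : Polynomial.aeval z Q = 0
  · exact ⟨0, by rw [hPQ, hQ]; simp⟩
  have hdvd : Q.map (algebraMap k K) ∣ P.map (algebraMap k K) := by
    refine ⟨R, transcendental_iff_injective.1 hzt ?_⟩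
    rw [map_mul, Polynomial.aeval_map_algebraMap, Polynomial.aeval_map_algebraMap, hR, hPQ,
      mul_div_cancel₀ _ hQ]
  obtain ⟨S, rfl⟩ := (Polynomial.map_dvd_map' _).1 hdvd
  exact ⟨S, by rw [hPQ, map_mul, mul_div_cancel_left₀ _ hQ]⟩

/-- Let `E` be a subfield of `k(x) ∩ K(ξ)` containing an element of `K[ξ]` transcendental over `K`.
Then there is `z ∈ E ∩ K[ξ]`, transcendental over `K`, with `E ∩ K[ξ] ⊆ k[z]`. -/
theorem exists_polynomial_generator {k K Ω : Type*} [Field k] [Field K] [Field Ω] [CharZero K]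
    [IsAlgClosed K] [Algebra k K] [Algebra K Ω] [Algebra k Ω] [IsScalarTower k K Ω] (x ξ : Ω)
    (hx : Transcendental k x) (hξ : Transcendental K ξ) (E : IntermediateField k Ω)
    (hEx : E ≤ IntermediateField.adjoin k {x})
    (hEξ : ∀ e ∈ E, e ∈ IntermediateField.adjoin K {ξ}) (c : Ω) (hcE : c ∈ E)
    (hc : Transcendental K c) (C : Polynomial K) (hC : Polynomial.aeval ξ C = c) :
    ∃ z ∈ E, (∃ W : Polynomial K, Polynomial.aeval ξ W = z) ∧ Transcendental K z ∧
      ∀ h ∈ E, (∃ H : Polynomial K, Polynomial.aeval ξ H = h) →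
        ∃ R : Polynomial k, Polynomial.aeval z R = h := by
  have : CharZero k := (algebraMap k K).charZero
  suffices ∃ z, E = IntermediateField.adjoin k {z} ∧
      (∃ W : Polynomial K, Polynomial.aeval ξ W = z) ∧ Transcendental K z by
    obtain ⟨z, rfl, ⟨W, hW⟩, hz⟩ := this
    exact ⟨z, IntermediateField.mem_adjoin_simple_self k z, ⟨W, hW⟩, hz, fun h hh ⟨H, hH⟩ =>
      aeval_descent ξ z h hz W hW hh H hH⟩
  obtain ⟨z, rfl⟩ := exists_generator x hx E hEx
  have hzE := IntermediateField.mem_adjoin_simple_self k z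
  have hzξ := hEξ _ hzE
  obtain ⟨P₀, Q₀, hcPQ⟩ := (IntermediateField.mem_adjoin_simple_iff k _).1 hcE
  have hQ₀ : Polynomial.aeval z Q₀ ≠ 0 := by
    intro h
    rw [h, div_zero] at hcPQ
    exact hc (hcPQ ▸ isAlgebraic_zero)
  have hzt : Transcendental K z := by
    intro hz
    have hle : IntermediateField.adjoin k {z} ≤ (algebraicClosure K Ω).restrictScalars k :=
      IntermediateField.adjoin_simple_le_iff.2 (mem_algebraicClosure_iff.2 hz)
    exact hc (mem_algebraicClosure_iff.1 (hle hcE))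
  obtain ⟨P, Q, hPQ, hQc⟩ : ∃ P Q : Polynomial k, IsCoprime P Q ∧
      Polynomial.aeval z Q * c = Polynomial.aeval z P := by
    have hQ00 : Q₀ ≠ 0 := by rintro rfl; simp at hQ₀
    obtain ⟨Q, P, g, hrel, rfl, rfl⟩ :=
      UniqueFactorizationMonoid.exists_reduced_factors Q₀ hQ00 P₀
    refine ⟨P, Q, hrel.symm.isCoprime, ?_⟩
    rw [map_mul] at hQ₀
    rw [hcPQ, map_mul, map_mul, mul_div_mul_left _ _ (left_ne_zero_of_mul hQ₀),
      mul_div_cancel₀ _ (right_ne_zero_of_mul hQ₀)]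
  have hQ0 : Q ≠ 0 := by
    rintro rfl
    rw [map_zero, zero_mul] at hQc
    have hP0 : P = 0 := by
      refine Polynomial.map_injective _ (algebraMap k K).injective
        (transcendental_iff_injective.1 hzt ?_)
      rw [Polynomial.aeval_map_algebraMap, ← hQc]
      simp
    subst hP0
    exact not_isCoprime_zero_zero hPQ
  by_cases hQd : Q.natDegree = 0
  · refine ⟨z, rfl, ?_, hzt⟩
    obtain ⟨a, rfl⟩ : ∃ a, Q = Polynomial.C a := ⟨_, Polynomial.eq_C_of_natDegree_eq_zero hQd⟩
    have hPd : (P.map (algebraMap k K)).natDegree ≠ 0 := by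
      rw [Polynomial.natDegree_map]
      intro hP
      rw [Polynomial.eq_C_of_natDegree_eq_zero hP, Polynomial.aeval_C, Polynomial.aeval_C] at hQc
      have ha : algebraMap k Ω a ≠ 0 := by simpa using hQ0
      apply hc
      have hc' : c = algebraMap k Ω (P.coeff 0) / algebraMap k Ω a :=
        eq_div_of_mul_eq ha (by rw [mul_comm]; exact hQc)
      rw [hc', IsScalarTower.algebraMap_apply k K Ω, IsScalarTower.algebraMap_apply k K Ω a, ← map_div₀]
      exact isAlgebraic_algebraMap _
    refine exists_aeval_of_isIntegralElem ξ z hξ hzξ (isIntegralElem_of_eval ξ z _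
      (Polynomial.C (algebraMap k K a) * C) hPd ?_)
    rw [Polynomial.aeval_map_algebraMap, map_mul, hC, ← hQc, Polynomial.aeval_C, Polynomial.aeval_C,
      ← IsScalarTower.algebraMap_apply]
  · obtain ⟨q, hq⟩ := IsAlgClosed.exists_aeval_eq_zero K Q (by
      exact fun h => hQd (Polynomial.natDegree_eq_of_degree_eq_some h))
    have hT := exists_aeval_inv_sub_root ξ z c hξ hzξ hzt C hC P Q hPQ hQc
    obtain ⟨T, hTq⟩ := hT q hq
    obtain ⟨r, rfl⟩ := exists_root_in_base Q hQ0 q hq (fun q' hq' => by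
      obtain ⟨T', hT'⟩ := hT q' hq'
      exact root_unique ξ z hξ hzt q' q T' T hT' hTq)
    rw [← IsScalarTower.algebraMap_apply] at hTq
    have hinv : z = ((z - algebraMap k Ω r)⁻¹)⁻¹ + algebraMap k Ω r := by rw [inv_inv]; ring
    refine ⟨(z - algebraMap k Ω r)⁻¹, le_antisymm ?_ ?_, ⟨T, hTq⟩, ?_⟩
    · rw [IntermediateField.adjoin_simple_le_iff]
      have := add_mem (inv_mem (IntermediateField.mem_adjoin_simple_self k
        (z - algebraMap k Ω r)⁻¹)) (IntermediateField.algebraMap_mem _ r)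
      rwa [← hinv] at this
    · rw [IntermediateField.adjoin_simple_le_iff]
      exact inv_mem (sub_mem hzE (IntermediateField.algebraMap_mem _ r))
    · intro h
      apply hzt
      rw [hinv, IsScalarTower.algebraMap_apply k K Ω] 
      rw [IsScalarTower.algebraMap_apply k K Ω] at h
      exact h.inv.add (isAlgebraic_algebraMap _)

/-! ### Descent of the coefficients -/

theorem transcendental_of_derivation_ne_zero {K M : Type*} [Field K] [CharZero K] [Field M]
    [Algebra K M] (D : Derivation K M M) (a : M) (ha : D a ≠ 0) : Transcendental K a := by
  have h : AlgebraicIndependent K (fun _ : Unit => a) :=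
    aeval_injective_of_derivations (fun _ => D) _
      (fun i j hij => absurd (Subsingleton.elim i j) hij) (fun _ => ha)
  exact algebraicIndependent_unique_type_iff.1 h

/-- The heart of the descent.  The element `z` is the new state variable, and `g`, `f · ∂z/∂x` are
the output and the dynamics of the given system written in the state `z`; `ξ` is the state in
which the system is polynomial over `K`. -/
theorem exists_descent {k K Ω : Type*} [Field k] [Field K] [Field Ω] [CharZero K]
    [IsAlgClosed K] [Algebra k K] [Algebra K Ω] [Algebra k Ω] [IsScalarTower k K Ω]
    (Dx Du : Derivation K Ω Ω) (u x ξ f g : Ω) (hxu : Dx u = 0) (hxx : Dx x = 1)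
    (huu : Du u = 1) (hux : Du x = 0) (huξ : Du ξ = 0) (hxξ : Dx ξ ≠ 0) (hg : Dx g ≠ 0)
    (hf' : f ∈ IntermediateField.adjoin (IntermediateField.adjoin k {x}) {u})
    (hg' : g ∈ IntermediateField.adjoin (IntermediateField.adjoin k {x}) {u})
    (F G : Polynomial (Polynomial K))
    (hF : F.eval₂ (Polynomial.aeval (R := K) ξ).toRingHom u = f * Dx ξ)
    (hG : G.eval₂ (Polynomial.aeval (R := K) ξ).toRingHom u = g) :
    ∃ z : Ω, Dx z ≠ 0 ∧ Du z = 0 ∧ ∃ F₀ G₀ : Polynomial (Polynomial k),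
      F₀.eval₂ (Polynomial.aeval (R := k) z).toRingHom u = f * Dx z ∧
      G₀.eval₂ (Polynomial.aeval (R := k) z).toRingHom u = g := by
  have : CharZero Ω := charZero_of_injective_algebraMap (algebraMap K Ω).injective
  have hξ := transcendental_of_derivation_ne_zero Dx ξ hxξ
  have hx : Transcendental k x :=
    (transcendental_of_derivation_ne_zero Dx x (by rw [hxx]; exact one_ne_zero)).restrictScalars
      (algebraMap k K).injective
  have hk : ∀ (D : Derivation K Ω Ω) (a : k), D (algebraMap k Ω a) = 0 := fun D a => by
    rw [IsScalarTower.algebraMap_apply k K Ω, D.map_algebraMap]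
  have hSu : ∀ s ∈ IntermediateField.adjoin k {x}, Du s = 0 := by
    intro s hs
    induction hs using IntermediateField.adjoin_induction with
    | mem s hs => rw [Set.mem_singleton_iff.1 hs, hux]
    | algebraMap a => exact hk Du a
    | add a b _ _ ha hb => rw [map_add, ha, hb, add_zero]
    | inv a _ ha => rw [Derivation.leibniz_inv, ha, smul_zero]
    | mul a b _ _ ha hb => rw [Derivation.leibniz, ha, hb, smul_zero, smul_zero, add_zero]
  have hSx : ∀ s ∈ IntermediateField.adjoin k {x}, Dx s ∈ IntermediateField.adjoin k {x} := by
    intro s hs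
    induction hs using IntermediateField.adjoin_induction with
    | mem s hs => rw [Set.mem_singleton_iff.1 hs, hxx]; exact one_mem _
    | algebraMap a => rw [hk]; exact zero_mem _
    | add a b _ _ ha hb => rw [map_add]; exact add_mem ha hb
    | inv a h ha =>
      rw [Derivation.leibniz_inv]
      exact mul_mem (neg_mem (pow_mem (inv_mem h) 2)) ha
    | mul a b h h' ha hb =>
      rw [Derivation.leibniz]
      exact add_mem (mul_mem h hb) (mul_mem h' ha)
  have hconst : ∀ P : Polynomial K, Du (Polynomial.aeval ξ P) = 0 := fun P => by
    rw [Derivation.map_aeval, huξ, smul_zero]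
  have hcoeff : ∀ P : Polynomial (Polynomial K),
      P.eval₂ (Polynomial.aeval (R := K) ξ).toRingHom u ∈
        IntermediateField.adjoin (IntermediateField.adjoin k {x}) {u} →
      ∀ i, Polynomial.aeval ξ (P.coeff i) ∈ IntermediateField.adjoin k {x} := by
    intro P hP i
    rw [← Polynomial.eval_map] at hP
    have := coeff_mem_of_eval_mem Du u huu _ hSu _ (fun j => by
      rw [Polynomial.coeff_map]; exact hconst _) hP i
    rwa [Polynomial.coeff_map] at this
  -- E = k(x) ∩ K(ξ) contains all coefficients under consideration.
  let E : IntermediateField k Ω := IntermediateField.adjoin k {x} ⊓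
    (IntermediateField.adjoin K {ξ}).restrictScalars k
  have hpoly : ∀ P : Polynomial K, Polynomial.aeval ξ P ∈ IntermediateField.adjoin K {ξ} :=
    fun P => (IntermediateField.mem_adjoin_simple_iff K _).2 ⟨P, 1, by simp⟩
  have hGc := hcoeff G (hG ▸ hg')
  obtain ⟨i, hi⟩ : ∃ i, Dx (Polynomial.aeval ξ (G.coeff i)) ≠ 0 := by
    by_contra! hc
    apply hg
    rw [← hG, Polynomial.eval₂_eq_sum, Polynomial.sum, map_sum]
    refine Finset.sum_eq_zero fun i _ => ?_
    rw [Derivation.leibniz, Derivation.leibniz_pow, hxu, smul_zero, smul_zero, smul_zero, zero_add]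
    exact (congrArg (u ^ i • ·) (hc i)).trans (smul_zero _)
  obtain ⟨z, hzE, ⟨W, hW⟩, hz, hE⟩ := exists_polynomial_generator x ξ hx hξ E inf_le_left
    (fun e he => he.2) _ ⟨hGc i, hpoly _⟩ (transcendental_of_derivation_ne_zero Dx _ hi) _ rfl
  have hzx : Dx z ≠ 0 := by
    obtain ⟨R, hR⟩ := hE _ ⟨hGc i, hpoly _⟩ ⟨_, rfl⟩
    intro h
    apply hi
    rw [← hR, ← Polynomial.aeval_map_algebraMap K, Derivation.map_aeval, h, smul_zero]
  have hlift : ∀ P : Polynomial (Polynomial K),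
      P.eval₂ (Polynomial.aeval (R := K) ξ).toRingHom u ∈
        IntermediateField.adjoin (IntermediateField.adjoin k {x}) {u} →
      ∃ P₀ : Polynomial (Polynomial k), P₀.eval₂ (Polynomial.aeval (R := k) z).toRingHom u =
        P.eval₂ (Polynomial.aeval (R := K) ξ).toRingHom u := by
    intro P hP
    have hl : P.map (Polynomial.aeval (R := K) ξ).toRingHom ∈
        Polynomial.lifts (Polynomial.aeval (R := k) z).toRingHom := by
      rw [Polynomial.lifts_iff_coeff_lifts]
      intro j
      rw [Polynomial.coeff_map]
      exact hE _ ⟨hcoeff P hP j, hpoly _⟩ ⟨_, rfl⟩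
    obtain ⟨P₀, hP₀⟩ := (Polynomial.mem_lifts _).1 hl
    exact ⟨P₀, by rw [← Polynomial.eval_map, hP₀, Polynomial.eval_map]⟩
  obtain ⟨G₀, hG₀⟩ := hlift G (hG ▸ hg')
  have hFz : (F * Polynomial.C (Polynomial.derivative W)).eval₂
      (Polynomial.aeval (R := K) ξ).toRingHom u = f * Dx z := by
    rw [Polynomial.eval₂_mul, hF, Polynomial.eval₂_C, ← hW, Derivation.map_aeval, smul_eq_mul,
      mul_assoc, mul_comm (Dx ξ)]
    rfl
  obtain ⟨F₀, hF₀⟩ := hlift (F * Polynomial.C (Polynomial.derivative W)) (by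
    rw [hFz]
    exact mul_mem hf' (IntermediateField.algebraMap_mem _
      (⟨Dx z, hSx z hzE.1⟩ : IntermediateField.adjoin k {x})))
  exact ⟨z, hzx, by rw [← hW]; exact hconst W, F₀, G₀, hF₀.trans hFz, hG₀.trans hG⟩

/-! ### The rings of functions in `u` and `x` -/

theorem map_aeval_vec {K M : Type} [Field K] [Field M] [Algebra K M] (φ : LL K →ₐ[K] M)
    (a b c d : LL K) (F : MvPolynomial (Fin 4) K) :
    φ (aeval ![a, b, c, d] F) = aeval ![φ a, φ b, φ c, φ d] F := by
  rw [MvPolynomial.comp_aeval_apply]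
  congr 2
  ext j
  fin_cases j <;> rfl

/-- The chain rule on `K(u,x)` along an embedding `ψ`. -/
theorem derivation_map_of_mem_Kux {M : Type*} [Field M] {K : Type} [Field K] [Algebra K M]
    (Dx Du : Derivation K (LL K) (LL K))
    (hDxu : Dx (uL K) = 0) (hDxx : Dx (xL K) = 1) (hDuu : Du (uL K) = 1) (hDux : Du (xL K) = 0)
    (ψ : LL K →ₐ[K] M) (D : Derivation K M M) (p : LL K) (hp : p ∈ Kux K) :
    D (ψ p) = ψ (Du p) * D (ψ (uL K)) + ψ (Dx p) * D (ψ (xL K)) := by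
  induction hp using IntermediateField.adjoin_induction with
  | mem s hs =>
    rcases hs with rfl | rfl
    · simp [hDxu, hDuu]
    · simp [hDxx, hDux]
  | algebraMap a => simp
  | add a b _ _ ha hb => simp only [map_add, ha, hb]; ring
  | inv a _ ha =>
    simp only [map_inv₀, Derivation.leibniz_inv, ha, smul_eq_mul, map_mul, map_neg, map_pow]
    ring
  | mul a b _ _ ha hb =>
    simp only [map_mul, Derivation.leibniz, ha, hb, smul_eq_mul, map_add]
    ring

theorem derivation_mem_kFracUX {K : Type} [Field K] (k : Subfield K)
    (D : Derivation K (LL K) (LL K)) (hu : D (uL K) ∈ kFracUX K k) (hx : D (xL K) ∈ kFracUX K k)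
    (p : LL K) (hp : p ∈ kFracUX K k) : D p ∈ kFracUX K k := by
  have hp' : p ∈ kFracUX K k ∧ D p ∈ kFracUX K k := by
    induction hp using Subfield.closure_induction with
    | mem s hs =>
      refine ⟨Subfield.subset_closure hs, ?_⟩
      rcases hs with ⟨a, -, rfl⟩ | rfl | rfl
      · rw [D.map_algebraMap]; exact zero_mem _
      · exact hu
      · exact hx
    | one => exact ⟨one_mem _, by rw [D.map_one_eq_zero]; exact zero_mem _⟩
    | add a b _ _ ha hb => exact ⟨add_mem ha.1 hb.1, by rw [map_add]; exact add_mem ha.2 hb.2⟩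
    | neg a _ ha => exact ⟨neg_mem ha.1, by rw [map_neg]; exact neg_mem ha.2⟩
    | inv a _ ha =>
      refine ⟨inv_mem ha.1, ?_⟩
      rw [Derivation.leibniz_inv]
      exact mul_mem (neg_mem (pow_mem (inv_mem ha.1) 2)) ha.2
    | mul a b _ _ ha hb =>
      refine ⟨mul_mem ha.1 hb.1, ?_⟩
      rw [Derivation.leibniz]
      exact add_mem (mul_mem ha.1 hb.2) (mul_mem hb.1 ha.2)
  exact hp'.2

theorem derivation_mem_KpolyUX {K : Type} [Field K]
    (D : Derivation K (LL K) (LL K)) (hu : D (uL K) ∈ KpolyUX K) (hx : D (xL K) ∈ KpolyUX K)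
    (p : LL K) (hp : p ∈ KpolyUX K) : D p ∈ KpolyUX K := by
  induction hp using Algebra.adjoin_induction with
  | mem s hs =>
    rcases hs with rfl | rfl
    · exact hu
    · exact hx
  | algebraMap a => rw [D.map_algebraMap]; exact zero_mem _
  | add a b _ _ ha hb => rw [map_add]; exact add_mem ha hb
  | mul a b h h' ha hb =>
    rw [Derivation.leibniz]
    exact add_mem (mul_mem h hb) (mul_mem h' ha)

theorem KpolyUX_le_Kux (K : Type) [Field K] : KpolyUX K ≤ (Kux K).toSubalgebra :=
  IntermediateField.algebra_adjoin_le_adjoin K _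

theorem kFracUX_le_Kux {K : Type} [Field K] (k : Subfield K) :
    kFracUX K k ≤ (Kux K).toSubfield := by
  refine Subfield.closure_le.2 ?_
  rintro s (⟨a, -, rfl⟩ | hs)
  · exact IntermediateField.algebraMap_mem _ a
  · exact IntermediateField.subset_adjoin K _ hs

theorem kPolyUX_le_kFracUX {K : Type} [Field K] (k : Subfield K) :
    kPolyUX K k ≤ (kFracUX K k).toSubring :=
  Subring.closure_le.2 Subfield.subset_closure

theorem exists_eval₂_of_mem_KpolyUX {K M : Type} [Field K] [Field M] [Algebra K M]
    (ψ : LL K →ₐ[K] M) (p : LL K) (hp : p ∈ KpolyUX K) :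
    ∃ P : Polynomial (Polynomial K),
      P.eval₂ (Polynomial.aeval (R := K) (ψ (xL K))).toRingHom (ψ (uL K)) = ψ p := by
  induction hp using Algebra.adjoin_induction with
  | mem s hs =>
    rcases hs with rfl | rfl
    · exact ⟨Polynomial.X, by simp⟩
    · exact ⟨Polynomial.C Polynomial.X, by simp⟩
  | algebraMap a => exact ⟨Polynomial.C (Polynomial.C a), by simp⟩
  | add a b _ _ ha hb =>
    obtain ⟨P, hP⟩ := ha
    obtain ⟨Q, hQ⟩ := hb
    exact ⟨P + Q, by rw [Polynomial.eval₂_add, hP, hQ, map_add]⟩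
  | mul a b _ _ ha hb =>
    obtain ⟨P, hP⟩ := ha
    obtain ⟨Q, hQ⟩ := hb
    exact ⟨P * Q, by rw [Polynomial.eval₂_mul, hP, hQ, map_mul]⟩

theorem map_mem_adjoin_of_mem_kFracUX {K M : Type} [Field K] [Field M] [Algebra K M]
    (k : Subfield K) (ι : LL K →ₐ[K] M) (p : LL K) (hp : p ∈ kFracUX K k) :
    ι p ∈ IntermediateField.adjoin (IntermediateField.adjoin k {ι (xL K)}) {ι (uL K)} := by
  have hle : kFracUX K k ≤ (IntermediateField.adjoin (IntermediateField.adjoin k {ι (xL K)})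
      {ι (uL K)}).toSubfield.comap ι.toRingHom := by
    refine Subfield.closure_le.2 ?_
    rintro s (⟨a, ha, rfl⟩ | rfl | rfl)
    · change ι (algebraMap K (LL K) a) ∈ IntermediateField.adjoin _ _
      rw [ι.commutes]
      exact IntermediateField.algebraMap_mem (IntermediateField.adjoin
        (IntermediateField.adjoin k {ι (xL K)}) {ι (uL K)}) (algebraMap k (IntermediateField.adjoin k {ι (xL K)})
        ⟨a, ha⟩)
    · exact IntermediateField.mem_adjoin_simple_self _ (ι (uL K))
    · exact IntermediateField.algebraMap_mem (IntermediateField.adjoin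
        (IntermediateField.adjoin k {ι (xL K)}) {ι (uL K)}) (⟨ι (xL K),
        IntermediateField.mem_adjoin_simple_self k (ι (xL K))⟩ : IntermediateField.adjoin k {ι (xL K)})
  exact hle hp

theorem exists_mem_kPolyUX {K M : Type} [Field K] [Field M] [Algebra K M] (k : Subfield K)
    (θ : LL K →ₐ[K] M) (P : Polynomial (Polynomial k)) :
    ∃ p ∈ kPolyUX K k,
      θ p = P.eval₂ (Polynomial.aeval (R := k) (θ (xL K))).toRingHom (θ (uL K)) := by
  have hu : uL K ∈ kPolyUX K k := Subring.subset_closure (Or.inr (Or.inl rfl))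
  have hx : xL K ∈ kPolyUX K k := Subring.subset_closure (Or.inr (Or.inr rfl))
  have h1 : ∀ Q : Polynomial k, ∃ p ∈ kPolyUX K k, θ p = Polynomial.aeval (θ (xL K)) Q := by
    intro Q
    induction Q using Polynomial.induction_on' with
    | add Q R hQ hR =>
      obtain ⟨a, ha, ha'⟩ := hQ
      obtain ⟨b, hb, hb'⟩ := hR
      exact ⟨a + b, add_mem ha hb, by rw [map_add, map_add, ha', hb']⟩
    | monomial n c =>
      refine ⟨algebraMap K (LL K) c * xL K ^ n, mul_mem
        (Subring.subset_closure (Or.inl ⟨c, c.2, rfl⟩)) (pow_mem hx n), ?_⟩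
      rw [map_mul, map_pow, θ.commutes, Polynomial.aeval_monomial]
      rfl
  induction P using Polynomial.induction_on' with
  | add Q R hQ hR =>
    obtain ⟨a, ha, ha'⟩ := hQ
    obtain ⟨b, hb, hb'⟩ := hR
    exact ⟨a + b, add_mem ha hb, by rw [map_add, Polynomial.eval₂_add, ha', hb']⟩
  | monomial n c =>
    obtain ⟨a, ha, ha'⟩ := h1 c
    refine ⟨a * uL K ^ n, mul_mem ha (pow_mem hu n), ?_⟩
    rw [map_mul, map_pow, ha', Polynomial.eval₂_monomial]
    rfl

/-- The theorem relative to a chosen algebraic closure `Ω` of `L`.  Keeping `Ω` abstract gives it a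
single `k`-algebra structure, the one through `K`. -/
theorem exists_poly_k_realization_of_algebraic
    {K : Type} [Field K] [IsAlgClosed K] [CharZero K] (k : Subfield K)
    (Ω : Type) [Field Ω] [IsAlgClosed Ω] [Algebra K Ω] [Algebra (LL K) Ω]
    [IsScalarTower K (LL K) Ω] [Algebra.IsAlgebraic (LL K) Ω]
    (Dx Du : Derivation K (LL K) (LL K))
    (hDxu : Dx (uL K) = 0) (hDxu₁ : Dx (u₁L K) = 0) (hDxx : Dx (xL K) = 1)
    (hDuu : Du (uL K) = 1) (hDuu₁ : Du (u₁L K) = 0) (hDux : Du (xL K) = 0)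
    (F : MvPolynomial (Fin 4) K) (hFirr : Irreducible F) (hFdeg : 0 < F.degreeOf 3)
    (hk : ∃ f g : LL K, IsRealization Dx Du F f g ∧ f ∈ kFracUX K k ∧ g ∈ kFracUX K k)
    (hpoly : ∃ f g : LL K, IsPolyRealization Dx Du F f g) :
    ∃ f₀ g₀ : LL K, IsRealization Dx Du F f₀ g₀ ∧
      f₀ ∈ kPolyUX K k ∧ g₀ ∈ kPolyUX K k := by
  obtain ⟨f₂, g₂, ⟨-, -, hg₂x, hF₂⟩, hf₂, hg₂⟩ := hk
  obtain ⟨f₁, g₁, ⟨-, -, hg₁x, hF₁⟩, hf₁, hg₁⟩ := hpoly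
  have : CharZero (LL K) := charZero_of_injective_algebraMap (algebraMap K (LL K)).injective
  let ι : LL K →ₐ[K] Ω := IsScalarTower.toAlgHom K (LL K) Ω
  obtain ⟨D1, hD1u, hD1u₁, hD1x⟩ := exists_derivation_u₁ K
  obtain ⟨Ex, hEx⟩ := exists_derivation_algebraic_extension (M := Ω) Dx
  obtain ⟨Eu, hEu⟩ := exists_derivation_algebraic_extension (M := Ω) Du
  obtain ⟨E1, hE1⟩ := exists_derivation_algebraic_extension (M := Ω) D1
  replace hEx : ∀ s, Ex (ι s) = ι (Dx s) := hEx
  replace hEu : ∀ s, Eu (ι s) = ι (Du s) := hEu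
  replace hE1 : ∀ s, E1 (ι s) = ι (D1 s) := hE1
  obtain ⟨i₁, hi₁u, hi₁u₁, hi₁x⟩ := exists_hom Dx Du D1 (uL K) (u₁L K) g₁ hDxu hDxu₁ hDuu hDuu₁
    hD1u hD1u₁ hg₁x
  obtain ⟨i₂, hi₂u, hi₂u₁, hi₂x⟩ := exists_hom Dx Du D1 (uL K) (u₁L K) g₂ hDxu hDxu₁ hDuu hDuu₁
    hD1u hD1u₁ hg₂x
  obtain ⟨ψ, hψi, hψy⟩ := exists_common_embedding F hFirr hFdeg i₁ (ι.comp i₂)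
    (lieD Dx Du f₁ g₁) (ι (lieD Dx Du f₂ g₂)) (by rw [hi₁u, hi₁u₁, hi₁x]; exact hF₁) (by
      simp only [AlgHom.comp_apply, hi₂u, hi₂u₁, hi₂x]
      rw [← map_aeval_vec, hF₂, map_zero])
  have hψu : ψ (uL K) = ι (uL K) := by
    have := hψi (uL K); rwa [hi₁u, AlgHom.comp_apply, hi₂u] at this
  have hψu₁ : ψ (u₁L K) = ι (u₁L K) := by
    have := hψi (u₁L K); rwa [hi₁u₁, AlgHom.comp_apply, hi₂u₁] at this
  have hψg : ψ g₁ = ι g₂ := by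
    have := hψi (xL K); rwa [hi₁x, AlgHom.comp_apply, hi₂x] at this
  have hEψ : ∀ (D : Derivation K Ω Ω) (p : LL K), p ∈ KpolyUX K →
      D (ψ p) = ψ (Du p) * D (ι (uL K)) + ψ (Dx p) * D (ψ (xL K)) := fun D p hp => by
    rw [← hψu]
    exact derivation_map_of_mem_Kux Dx Du hDxu hDxx hDuu hDux ψ D p (KpolyUX_le_Kux K hp)
  have hE1ι : ∀ p : LL K, p ∈ kFracUX K k → E1 (ι p) = 0 := fun p hp => by
    rw [derivation_map_of_mem_Kux Dx Du hDxu hDxx hDuu hDux ι E1 p (kFracUX_le_Kux k hp), hE1, hE1,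
      hD1u, hD1x]
    simp
  have hψg₁x : ψ (Dx g₁) ≠ 0 := by simpa using hg₁x
  -- ∂/∂u₁ of ψ(g₁) = g₂ shows that ξ does not involve u₁.
  have h1ξ : E1 (ψ (xL K)) = 0 := by
    have := hEψ E1 g₁ hg₁
    rw [hψg, hE1ι _ hg₂, hE1, hD1u, map_zero, mul_zero, zero_add] at this
    exact (mul_eq_zero.1 this.symm).resolve_left hψg₁x
  have hE1ψ : ∀ p : LL K, p ∈ KpolyUX K → E1 (ψ p) = 0 := fun p hp => by
    rw [hEψ E1 p hp, h1ξ, hE1, hD1u]; simp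
  have hDxg₁ : Dx g₁ ∈ KpolyUX K :=
    derivation_mem_KpolyUX Dx (hDxu ▸ zero_mem _) (hDxx ▸ one_mem _) g₁ hg₁
  have hDug₁ : Du g₁ ∈ KpolyUX K :=
    derivation_mem_KpolyUX Du (hDuu ▸ one_mem _) (hDux ▸ zero_mem _) g₁ hg₁
  have hDxg₂ : Dx g₂ ∈ kFracUX K k :=
    derivation_mem_kFracUX k Dx (hDxu ▸ zero_mem _) (hDxx ▸ one_mem _) g₂ hg₂
  have hDug₂ : Du g₂ ∈ kFracUX K k :=
    derivation_mem_kFracUX k Du (hDuu ▸ one_mem _) (hDux ▸ zero_mem _) g₂ hg₂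
  have hlie : ψ (Dx g₁ * f₁) + ψ (Du g₁) * ι (u₁L K) =
      ι (Dx g₂ * f₂) + ι (Du g₂) * ι (u₁L K) := by
    have := hψy
    rwa [lieD, lieD, map_add, map_add, map_mul ψ (Du g₁), map_mul ι (Du g₂), hψu₁] at this
  -- Compare the coefficients of u₁ in the two Lie derivatives by applying ∂/∂u₁.
  have hDu : ψ (Du g₁) = ι (Du g₂) := by
    have := congrArg E1 hlie
    rw [map_add, map_add, Derivation.leibniz, Derivation.leibniz, hE1ψ _ (mul_mem hDxg₁ hf₁),
      hE1ψ _ hDug₁, hE1ι _ (mul_mem hDxg₂ hf₂), hE1ι _ hDug₂, hE1, hD1u₁] at this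
    simpa using this
  have hDxf : ψ (Dx g₁) * ψ f₁ = ι (Dx g₂) * ι f₂ := by
    rw [hDu] at hlie
    simpa using hlie
  -- ∂/∂u of ψ(g₁) = g₂, together with the previous identity, shows that ξ does not involve u.
  have huξ : Eu (ψ (xL K)) = 0 := by
    have := hEψ Eu g₁ hg₁
    rw [hψg, hEu, hEu, hDuu, map_one, mul_one, hDu, left_eq_add] at this
    exact (mul_eq_zero.1 this).resolve_left hψg₁x
  have hxg : ι (Dx g₂) = ψ (Dx g₁) * Ex (ψ (xL K)) := by
    have := hEψ Ex g₁ hg₁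
    rwa [hψg, hEx, hEx, hDxu, map_zero, mul_zero, zero_add] at this
  have hιg₂x : ι (Dx g₂) ≠ 0 := by simpa using hg₂x
  have hxξ : Ex (ψ (xL K)) ≠ 0 := fun h => hιg₂x (by rw [hxg, h, mul_zero])
  have hf : ψ f₁ = ι f₂ * Ex (ψ (xL K)) := by
    apply mul_left_cancel₀ hψg₁x
    rw [hDxf, hxg]; ring
  obtain ⟨P, hP⟩ := exists_eval₂_of_mem_KpolyUX ψ f₁ hf₁
  obtain ⟨Q, hQ⟩ := exists_eval₂_of_mem_KpolyUX ψ g₁ hg₁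
  rw [hψu] at hP hQ
  obtain ⟨z, hzx, hzu, P₀, Q₀, hP₀, hQ₀⟩ := exists_descent (k := k) Ex Eu (ι (uL K)) (ι (xL K))
    (ψ (xL K)) (ι f₂) (ι g₂) (by rw [hEx, hDxu, map_zero]) (by rw [hEx, hDxx, map_one])
    (by rw [hEu, hDuu, map_one]) (by rw [hEu, hDux, map_zero]) huξ hxξ (by rwa [hEx])
    (map_mem_adjoin_of_mem_kFracUX k ι f₂ hf₂) (map_mem_adjoin_of_mem_kFracUX k ι g₂ hg₂) P Q
    (hP.trans hf) (hQ.trans hψg)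
  obtain ⟨θ, hθu, hθu₁, hθx⟩ := exists_hom Ex Eu E1 (ι (uL K)) (ι (u₁L K)) z
    (by rw [hEx, hDxu, map_zero]) (by rw [hEx, hDxu₁, map_zero]) (by rw [hEu, hDuu, map_one])
    (by rw [hEu, hDuu₁, map_zero]) (by rw [hE1, hD1u, map_zero]) (by rw [hE1, hD1u₁, map_one]) hzx
  obtain ⟨f₀, hf₀, hθf⟩ := exists_mem_kPolyUX k θ P₀
  obtain ⟨g₀, hg₀, hθg⟩ := exists_mem_kPolyUX k θ Q₀
  rw [hθx, hθu, hP₀] at hθf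
  rw [hθx, hθu, hQ₀] at hθg
  have hf₀' : f₀ ∈ Kux K := kFracUX_le_Kux k (kPolyUX_le_kFracUX k hf₀)
  have hg₀' : g₀ ∈ Kux K := kFracUX_le_Kux k (kPolyUX_le_kFracUX k hg₀)
  have hθx' : ι (Dx g₂) = θ (Dx g₀) * Ex z := by
    have := derivation_map_of_mem_Kux Dx Du hDxu hDxx hDuu hDux θ Ex g₀ hg₀'
    rwa [hθg, hθu, hθx, hEx, hEx, hDxu, map_zero, mul_zero, zero_add] at this
  have hθu' : ι (Du g₂) = θ (Du g₀) := by
    have := derivation_map_of_mem_Kux Dx Du hDxu hDxx hDuu hDux θ Eu g₀ hg₀'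
    rwa [hθg, hθu, hθx, hEu, hEu, hDuu, hzu, map_one, mul_one, mul_zero, add_zero] at this
  have hθl : θ (lieD Dx Du f₀ g₀) = ι (lieD Dx Du f₂ g₂) := by
    rw [lieD, lieD, map_add, map_add, map_mul, map_mul, map_mul, map_mul, hθx', hθu', hθu₁, hθf]
    ring
  refine ⟨f₀, g₀, ⟨hf₀', hg₀', fun h => hιg₂x (by rw [hθx', h, map_zero, zero_mul]), ?_⟩, hf₀, hg₀⟩
  apply θ.toRingHom.injective
  change θ _ = θ 0
  rw [map_zero, map_aeval_vec, hθu, hθu₁, hθg, hθl, ← map_aeval_vec, hF₂, map_zero]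

/-! ### Polynomial realizations over `k` -/

/-- **Theorem 4.3 (polynomial realizations over the field of identifiable functions).**
Let `k` be a subfield of an algebraically closed field `K` of characteristic zero and
let `F ∈ k[u,u₁,y,y₁]` be irreducible over `K` with positive degree in `y₁`.  If `F`
admits a rational realization `(f,g)` with `f, g ∈ k(u,x)` and `F` also admits a
polynomial realization, then `F` admits a polynomial `k`-realization, i.e. a
realization `(f₀,g₀)` with `f₀, g₀ ∈ k[u,x]`. -/
theorem exists_poly_k_realization
    {K : Type} [Field K] [IsAlgClosed K] [CharZero K] (k : Subfield K)
    (Dx Du : Derivation K (LL K) (LL K))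
    (hDxu : Dx (uL K) = 0) (hDxu₁ : Dx (u₁L K) = 0) (hDxx : Dx (xL K) = 1)
    (hDuu : Du (uL K) = 1) (hDuu₁ : Du (u₁L K) = 0) (hDux : Du (xL K) = 0)
    (F : MvPolynomial (Fin 4) K) (hFirr : Irreducible F) (hFdeg : 0 < F.degreeOf 3)
    (hFk : ∀ m, MvPolynomial.coeff m F ∈ k)
    (hk : ∃ f g : LL K, IsRealization Dx Du F f g ∧ f ∈ kFracUX K k ∧ g ∈ kFracUX K k)
    (hpoly : ∃ f g : LL K, IsPolyRealization Dx Du F f g) :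
    ∃ f₀ g₀ : LL K, IsRealization Dx Du F f₀ g₀ ∧
      f₀ ∈ kPolyUX K k ∧ g₀ ∈ kPolyUX K k := by
  exact exists_poly_k_realization_of_algebraic k (AlgebraicClosure (LL K)) Dx Du hDxu hDxu₁ hDxx
    hDuu hDuu₁ hDux F hFirr hFdeg hk hpoly
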